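/- If C is a convex polyhedron and n a fixed unit normal, then the truncated volume V(s) = vol(C ∩ H⁻(s,n)) is a piecewise cubic polynomial in s: on each interval between consecutive values of s at which the plane passes through a vertex of C, V is given by a single polynomial of degree at most 3. -/

import Mathlib

open MeasureTheory Real Bornology
open scoped RealInnerProductSpace

noncomputable abbrev E3 := EuclideanSpace ℝ (Fin 3)
def IsP (a b : ℝ) (V : ℝ → ℝ) : Prop :=
  ∃ p : Polynomial ℝ, p.natDegree ≤ 3 ∧ ∀ t ∈ Set.Ioo a b, V t = Polynomial.eval t p

theorem IsP.congr {a b : ℝ} {V W : ℝ → ℝ} (h : IsP a b V) (hW : ∀ t ∈ Set.Ioo a b, W t = V t) :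
    IsP a b W := by
  obtain ⟨p, hp, h⟩ := h
  exact ⟨p, hp, fun t ht => (hW t ht).trans (h t ht)⟩

theorem IsP.const (a b c : ℝ) : IsP a b (fun _ => c) :=
  ⟨Polynomial.C c, by simp, by simp⟩

theorem IsP.cube (a b c d : ℝ) : IsP a b (fun t => (t - c) ^ 3 * d) := by
  refine ⟨(Polynomial.X - Polynomial.C c) ^ 3 * Polynomial.C d, ?_, by simp⟩
  refine (Polynomial.natDegree_mul_C_le _ _).trans ?_
  refine Polynomial.natDegree_pow_le.trans ?_
  simp

theorem IsP.sub {a b : ℝ} {V W : ℝ → ℝ} (h : IsP a b V) (h' : IsP a b W) :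
    IsP a b (fun t => V t - W t) := by
  obtain ⟨p, hp, h⟩ := h
  obtain ⟨q, hq, h'⟩ := h'
  refine ⟨p - q, (Polynomial.natDegree_sub_le _ _).trans (max_le hp hq), fun t ht => ?_⟩
  simp [h t ht, h' t ht]

theorem IsP.sum {ι : Type*} {a b : ℝ} (s : Finset ι) {V : ι → ℝ → ℝ} (h : ∀ i ∈ s, IsP a b (V i)) :
    IsP a b (fun t => ∑ i ∈ s, V i t) := by
  have h' : ∀ i, ∃ p : Polynomial ℝ, i ∈ s → p.natDegree ≤ 3 ∧
      ∀ t ∈ Set.Ioo a b, V i t = Polynomial.eval t p := by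
    intro i
    by_cases hi : i ∈ s
    · obtain ⟨p, hp⟩ := h i hi
      exact ⟨p, fun _ => hp⟩
    · exact ⟨0, fun h => absurd h hi⟩
  choose p hp using h'
  refine ⟨∑ i ∈ s, p i, Polynomial.natDegree_sum_le_of_forall_le _ _ fun i hi => (hp i hi).1, ?_⟩
  intro t ht
  rw [Polynomial.eval_finsetSum]
  exact Finset.sum_congr rfl fun i hi => (hp i hi).2 t ht

/-- Pointwise limits of cubic polynomials are cubic polynomials. -/
theorem IsP.lim {a b : ℝ} {V : ℕ → ℝ → ℝ} {W : ℝ → ℝ} (h : ∀ m, IsP a b (V m))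
    (hl : ∀ t ∈ Set.Ioo a b, Filter.Tendsto (fun m => V m t) Filter.atTop (nhds (W t))) :
    IsP a b W := by
  let L : Polynomial ℝ →ₗ[ℝ] (Set.Ioo a b → ℝ) :=
    { toFun := fun p t => Polynomial.eval (t : ℝ) p
      map_add' := by intros; ext; simp
      map_smul' := by intros; ext; simp }
  let S := (Polynomial.degreeLT ℝ 4).map L
  have : FiniteDimensional ℝ (Polynomial.degreeLT ℝ 4) :=
    Module.Finite.equiv (Polynomial.degreeLTEquiv ℝ 4).symm
  have hc : IsClosed (S : Set (Set.Ioo a b → ℝ)) := Submodule.closed_of_finiteDimensional S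
  have hmem : (fun t : Set.Ioo a b => W t) ∈ S := by
    refine hc.mem_of_tendsto (f := fun m => (fun t : Set.Ioo a b => V m t)) (b := Filter.atTop)
      (tendsto_pi_nhds.2 fun t => hl t t.2) (Filter.Eventually.of_forall fun m => ?_)
    obtain ⟨p, hp, hV⟩ := h m
    refine ⟨p, ?_, ?_⟩
    · rw [SetLike.mem_coe, Polynomial.mem_degreeLT]
      exact lt_of_le_of_lt (Polynomial.degree_le_of_natDegree_le hp) (by norm_num)
    · ext t; exact (hV t t.2).symm
  obtain ⟨p, hp, hpW⟩ := hmem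
  refine ⟨p, ?_, fun t ht => (congrFun hpW ⟨t, ht⟩).symm⟩
  rw [SetLike.mem_coe, Polynomial.mem_degreeLT] at hp
  by_cases h0 : p = 0
  · simp [h0]
  · exact Nat.le_of_lt_succ ((Polynomial.natDegree_lt_iff_degree_lt h0).2 hp)

theorem vol_hom (p : E3) (S : ℝ → Set E3)
    (hS : ∀ r > 0, ∀ x, AffineMap.homothety p r x ∈ S r ↔ x ∈ S 1) (r : ℝ) (hr : 0 < r) :
    volume (S r) = ENNReal.ofReal (r ^ 3) * volume (S 1) := by
  have : S r = AffineMap.homothety p r '' S 1 := by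
    ext x
    constructor
    · intro hx
      have e : AffineMap.homothety p r (AffineMap.homothety p r⁻¹ x) = x := by
        rw [← AffineMap.homothety_mul_apply, mul_inv_cancel₀ hr.ne']; simp
      exact ⟨AffineMap.homothety p r⁻¹ x, (hS r hr _).1 (by rwa [e]), e⟩
    · rintro ⟨y, hy, rfl⟩
      exact (hS r hr y).2 hy
  rw [this, Measure.addHaar_image_homothety]
  simp [abs_of_pos hr]

theorem coord_hom (B : AffineBasis (Fin 4) ℝ E3) (i j : Fin 4) (r : ℝ) (x : E3) (h : i ≠ j) :
    B.coord i (AffineMap.homothety (B j) r x) = r * B.coord i x := by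
  rw [AffineMap.homothety_eq_lineMap, AffineMap.apply_lineMap, B.coord_apply_ne h]
  simp [AffineMap.lineMap_apply]

/-- The part of the tetrahedron below level `t`. -/
def tet (B : AffineBasis (Fin 4) ℝ E3) (s : Fin 4 → ℝ) (t : ℝ) : Set E3 :=
  {x | (∀ i, 0 ≤ B.coord i x) ∧ ∑ i, B.coord i x * s i ≤ t}

theorem coord_cont (B : AffineBasis (Fin 4) ℝ E3) (i : Fin 4) : Continuous (B.coord i) :=
  AffineMap.continuous_of_finiteDimensional _

theorem tet_full_finite (B : AffineBasis (Fin 4) ℝ E3) :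
    volume {x : E3 | ∀ i, 0 ≤ B.coord i x} ≠ ⊤ := by
  have := B.convexHull_eq_nonneg_coord
  rw [← this]
  exact ((Set.finite_range B).isCompact_convexHull ℝ).measure_lt_top.ne

theorem tet_full_meas (B : AffineBasis (Fin 4) ℝ E3) :
    MeasurableSet {x : E3 | ∀ i, 0 ≤ B.coord i x} := by
  rw [Set.ofPred_forall]
  exact MeasurableSet.iInter fun i => (isClosed_le continuous_const (coord_cont B i)).measurableSet

theorem tet_meas (B : AffineBasis (Fin 4) ℝ E3) (s : Fin 4 → ℝ) (t : ℝ) :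
    MeasurableSet (tet B s t) := by
  refine (tet_full_meas B).inter (IsClosed.measurableSet ?_)
  exact isClosed_le (continuous_finsetSum _ fun i _ => (coord_cont B i).mul continuous_const)
    continuous_const

theorem tet_sub (B : AffineBasis (Fin 4) ℝ E3) (s : Fin 4 → ℝ) (t : ℝ) :
    tet B s t ⊆ {x : E3 | ∀ i, 0 ≤ B.coord i x} := fun _ h => h.1

theorem tet_finite (B : AffineBasis (Fin 4) ℝ E3) (s : Fin 4 → ℝ) (t : ℝ) :
    volume (tet B s t) ≠ ⊤ :=
  measure_ne_top_of_subset (tet_sub B s t) (tet_full_finite B)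

theorem coord_sum (B : AffineBasis (Fin 4) ℝ E3) (x : E3) :
    B.coord 0 x + B.coord 1 x + B.coord 2 x + B.coord 3 x = 1 := by
  have := B.sum_coord_apply_eq_one x
  rwa [Fin.sum_univ_four] at this

theorem mem_tet (B : AffineBasis (Fin 4) ℝ E3) (s : Fin 4 → ℝ) (t : ℝ) (x : E3) :
    x ∈ tet B s t ↔ (0 ≤ B.coord 0 x ∧ 0 ≤ B.coord 1 x ∧ 0 ≤ B.coord 2 x ∧ 0 ≤ B.coord 3 x) ∧
      B.coord 0 x * s 0 + B.coord 1 x * s 1 + B.coord 2 x * s 2 + B.coord 3 x * s 3 ≤ t := by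
  simp [tet, Fin.forall_fin_succ, Fin.sum_univ_four]

def cone1 (B : AffineBasis (Fin 4) ℝ E3) (c1 c2 c3 : ℝ) (r : ℝ) : Set E3 :=
  {x | (0 ≤ B.coord 1 x ∧ 0 ≤ B.coord 2 x ∧ 0 ≤ B.coord 3 x) ∧
    B.coord 1 x * c1 + B.coord 2 x * c2 + B.coord 3 x * c3 ≤ r}

theorem cone1_vol (B : AffineBasis (Fin 4) ℝ E3) (c1 c2 c3 : ℝ) (r : ℝ) (hr : 0 < r) :
    volume (cone1 B c1 c2 c3 r) = ENNReal.ofReal (r ^ 3) * volume (cone1 B c1 c2 c3 1) := by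
  refine vol_hom (B 0) (cone1 B c1 c2 c3) (fun r hr x => ?_) r hr
  simp only [cone1, Set.mem_ofPred_eq, coord_hom B 1 0 r x (by decide),
    coord_hom B 2 0 r x (by decide), coord_hom B 3 0 r x (by decide), mul_nonneg_iff_of_pos_left hr]
  refine and_congr_right fun _ => ?_
  rw [show ∀ p q w : ℝ, r * p * c1 + r * q * c2 + r * w * c3 = r * (p * c1 + q * c2 + w * c3) by
    intros; ring]
  exact mul_le_iff_le_one_right hr

def cone2 (B : AffineBasis (Fin 4) ℝ E3) (c1 c2 c3 : ℝ) (r : ℝ) : Set E3 :=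
  {x | (B.coord 0 x < 0 ∧ 0 ≤ B.coord 2 x ∧ 0 ≤ B.coord 3 x) ∧
    B.coord 0 x * c1 + B.coord 2 x * c2 + B.coord 3 x * c3 ≤ r}

theorem cone2_vol (B : AffineBasis (Fin 4) ℝ E3) (c1 c2 c3 : ℝ) (r : ℝ) (hr : 0 < r) :
    volume (cone2 B c1 c2 c3 r) = ENNReal.ofReal (r ^ 3) * volume (cone2 B c1 c2 c3 1) := by
  refine vol_hom (B 1) (cone2 B c1 c2 c3) (fun r hr x => ?_) r hr
  simp only [cone2, Set.mem_ofPred_eq, coord_hom B 0 1 r x (by decide),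
    coord_hom B 2 1 r x (by decide), coord_hom B 3 1 r x (by decide), mul_nonneg_iff_of_pos_left hr,
    show ∀ p : ℝ, r * p < 0 ↔ p < 0 from fun p => by
      rw [mul_neg_iff]; constructor <;> grind]
  refine and_congr_right fun _ => ?_
  rw [show ∀ p q w : ℝ, r * p * c1 + r * q * c2 + r * w * c3 = r * (p * c1 + q * c2 + w * c3) by
    intros; ring]
  exact mul_le_iff_le_one_right hr

def cone3 (B : AffineBasis (Fin 4) ℝ E3) (c1 c2 c3 : ℝ) (r : ℝ) : Set E3 :=
  {x | (0 ≤ B.coord 0 x ∧ 0 ≤ B.coord 1 x ∧ 0 ≤ B.coord 2 x) ∧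
    B.coord 0 x * c1 + B.coord 1 x * c2 + B.coord 2 x * c3 < r}

theorem cone3_vol (B : AffineBasis (Fin 4) ℝ E3) (c1 c2 c3 : ℝ) (r : ℝ) (hr : 0 < r) :
    volume (cone3 B c1 c2 c3 r) = ENNReal.ofReal (r ^ 3) * volume (cone3 B c1 c2 c3 1) := by
  refine vol_hom (B 3) (cone3 B c1 c2 c3) (fun r hr x => ?_) r hr
  simp only [cone3, Set.mem_ofPred_eq, coord_hom B 0 3 r x (by decide),
    coord_hom B 1 3 r x (by decide), coord_hom B 2 3 r x (by decide), mul_nonneg_iff_of_pos_left hr]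
  refine and_congr_right fun _ => ?_
  rw [show ∀ p q w : ℝ, r * p * c1 + r * q * c2 + r * w * c3 = r * (p * c1 + q * c2 + w * c3) by
    intros; ring]
  exact mul_lt_iff_lt_one_right hr

/-- One vertex below. -/
theorem case1 (B : AffineBasis (Fin 4) ℝ E3) (s : Fin 4 → ℝ) (a b : ℝ)
    (h0 : s 0 ≤ a) (h1 : b ≤ s 1) (h2 : b ≤ s 2) (h3 : b ≤ s 3) :
    IsP a b (fun t => (volume (tet B s t)).toReal) := by
  refine (IsP.cube a b (s 0)
    (volume (cone1 B (s 1 - s 0) (s 2 - s 0) (s 3 - s 0) 1)).toReal).congr fun t ht => ?_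
  have hr : 0 < t - s 0 := by linarith [ht.1]
  have : tet B s t = cone1 B (s 1 - s 0) (s 2 - s 0) (s 3 - s 0) (t - s 0) := by
    ext x
    have hs := coord_sum B x
    rw [mem_tet]
    simp only [cone1, Set.mem_ofPred_eq]
    have e0 : B.coord 0 x = 1 - B.coord 1 x - B.coord 2 x - B.coord 3 x := by linarith
    constructor
    · rintro ⟨⟨p0, p1, p2, p3⟩, h⟩
      refine ⟨⟨p1, p2, p3⟩, ?_⟩
      rw [e0] at h; linarith
    · rintro ⟨⟨p1, p2, p3⟩, h⟩
      have k1 := mul_le_mul_of_nonneg_left (show b - s 0 ≤ s 1 - s 0 by linarith) p1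
      have k2 := mul_le_mul_of_nonneg_left (show b - s 0 ≤ s 2 - s 0 by linarith) p2
      have k3 := mul_le_mul_of_nonneg_left (show b - s 0 ≤ s 3 - s 0 by linarith) p3
      refine ⟨⟨?_, p1, p2, p3⟩, ?_⟩
      · rw [e0]
        have hb : 0 < b - s 0 := by linarith [ht.2]
        by_contra hcon
        have : (b - s 0) * 1 < (b - s 0) * (B.coord 1 x + B.coord 2 x + B.coord 3 x) :=
          mul_lt_mul_of_pos_left (by linarith) hb
        linarith [ht.2]
      · rw [e0]; linarith
  rw [this, cone1_vol _ _ _ _ _ hr, ENNReal.toReal_mul, ENNReal.toReal_ofReal (by positivity)]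

/-- Three vertices below. -/
theorem case3 (B : AffineBasis (Fin 4) ℝ E3) (s : Fin 4 → ℝ) (a b : ℝ)
    (h0 : s 0 ≤ a) (h1 : s 1 ≤ a) (h2 : s 2 ≤ a) (h3 : b ≤ s 3) :
    IsP a b (fun t => (volume (tet B s t)).toReal) := by
  refine ((IsP.const a b (volume {x : E3 | ∀ i, 0 ≤ B.coord i x}).toReal).sub (IsP.cube a b (s 3)
    (-(volume (cone3 B (s 3 - s 0) (s 3 - s 1) (s 3 - s 2) 1)).toReal))).congr fun t ht => ?_
  have hr : 0 < s 3 - t := by linarith [ht.2]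
  have : {x : E3 | ∀ i, 0 ≤ B.coord i x} \ tet B s t
      = cone3 B (s 3 - s 0) (s 3 - s 1) (s 3 - s 2) (s 3 - t) := by
    ext x
    have hs := coord_sum B x
    rw [Set.mem_sdiff, mem_tet]
    simp only [cone3, Set.mem_ofPred_eq, Fin.forall_fin_succ]
    simp only [Fin.succ_zero_eq_one, Fin.succ_one_eq_two, IsEmpty.forall_iff, and_true,
      show Fin.succ (2 : Fin 3) = 3 from rfl]
    have e0 : B.coord 3 x = 1 - B.coord 0 x - B.coord 1 x - B.coord 2 x := by linarith
    constructor
    · rintro ⟨⟨p0, p1, p2, p3⟩, h⟩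
      refine ⟨⟨p0, p1, p2⟩, ?_⟩
      have h' := lt_of_not_ge fun h'' => h ⟨⟨p0, p1, p2, p3⟩, h''⟩
      rw [e0] at h'; linarith
    · rintro ⟨⟨p1, p2, p3⟩, h⟩
      have k1 := mul_le_mul_of_nonneg_left (show s 3 - a ≤ s 3 - s 0 by linarith) p1
      have k2 := mul_le_mul_of_nonneg_left (show s 3 - a ≤ s 3 - s 1 by linarith) p2
      have k3 := mul_le_mul_of_nonneg_left (show s 3 - a ≤ s 3 - s 2 by linarith) p3
      refine ⟨⟨p1, p2, p3, ?_⟩, fun hh => ?_⟩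
      · rw [e0]
        have hb : 0 < s 3 - a := by linarith [ht.1, ht.2]
        by_contra hcon
        have : (s 3 - a) * 1 < (s 3 - a) * (B.coord 0 x + B.coord 1 x + B.coord 2 x) :=
          mul_lt_mul_of_pos_left (by linarith) hb
        linarith [ht.1]
      · have := hh.2
        rw [e0] at this; linarith
  have h4 := congrArg (fun S => (volume S).toReal) this
  rw [measure_sdiff (tet_sub B s t) (tet_meas B s t).nullMeasurableSet (tet_finite B s t),
    ENNReal.toReal_sub_of_le (measure_mono (tet_sub B s t)) (tet_full_finite B),
    cone3_vol _ _ _ _ _ hr, ENNReal.toReal_mul, ENNReal.toReal_ofReal (by positivity)] at h4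
  linear_combination -h4

/-- Two vertices below, distinct levels. -/
theorem case2 (B : AffineBasis (Fin 4) ℝ E3) (s : Fin 4 → ℝ) (a b : ℝ)
    (h01 : s 0 < s 1) (h1 : s 1 ≤ a) (h2 : b ≤ s 2) (h3 : b ≤ s 3) :
    IsP a b (fun t => (volume (tet B s t)).toReal) := by
  refine ((IsP.cube a b (s 0)
    (volume (cone1 B (s 1 - s 0) (s 2 - s 0) (s 3 - s 0) 1)).toReal).sub (IsP.cube a b (s 1)
    (volume (cone2 B (s 0 - s 1) (s 2 - s 1) (s 3 - s 1) 1)).toReal)).congr fun t ht => ?_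
  have hr : 0 < t - s 0 := by linarith [ht.1]
  have hr1 : 0 < t - s 1 := by linarith [ht.1]
  have hsub : tet B s t ⊆ cone1 B (s 1 - s 0) (s 2 - s 0) (s 3 - s 0) (t - s 0) := by
    intro x
    have hs := coord_sum B x
    rw [mem_tet]
    simp only [cone1, Set.mem_ofPred_eq]
    have e0 : B.coord 0 x = 1 - B.coord 1 x - B.coord 2 x - B.coord 3 x := by linarith
    rintro ⟨⟨p0, p1, p2, p3⟩, h⟩
    refine ⟨⟨p1, p2, p3⟩, ?_⟩
    rw [e0] at h; linarith
  have : cone1 B (s 1 - s 0) (s 2 - s 0) (s 3 - s 0) (t - s 0) \ tet B s t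
      = cone2 B (s 0 - s 1) (s 2 - s 1) (s 3 - s 1) (t - s 1) := by
    ext x
    have hs := coord_sum B x
    rw [Set.mem_sdiff, mem_tet]
    simp only [cone1, cone2, Set.mem_ofPred_eq]
    have e0 : B.coord 0 x = 1 - B.coord 1 x - B.coord 2 x - B.coord 3 x := by linarith
    constructor
    · rintro ⟨⟨⟨p1, p2, p3⟩, h⟩, h'⟩
      refine ⟨⟨?_, p2, p3⟩, ?_⟩
      · by_contra hcon
        refine h' ⟨⟨not_lt.1 hcon, p1, p2, p3⟩, ?_⟩
        rw [e0]; linarith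
      · rw [e0]; linarith
    · rintro ⟨⟨p1, p2, p3⟩, h⟩
      have k1 := mul_nonneg_of_nonpos_of_nonpos p1.le (show s 0 - s 1 ≤ 0 by linarith)
      have k2 := mul_le_mul_of_nonneg_left (show b - s 1 ≤ s 2 - s 1 by linarith) p2
      have k3 := mul_le_mul_of_nonneg_left (show b - s 1 ≤ s 3 - s 1 by linarith) p3
      have hb : 0 < b - s 1 := by linarith [ht.2]
      have hle : B.coord 2 x + B.coord 3 x ≤ 1 := by
        by_contra hcon
        have : (b - s 1) * 1 < (b - s 1) * (B.coord 2 x + B.coord 3 x) :=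
          mul_lt_mul_of_pos_left (by linarith) hb
        linarith [ht.2]
      refine ⟨⟨⟨by linarith, p2, p3⟩, ?_⟩, fun hh => by linarith [hh.1.1]⟩
      rw [e0] at h; linarith
  -- finiteness of the big cone
  have hfin : volume (cone1 B (s 1 - s 0) (s 2 - s 0) (s 3 - s 0) (t - s 0)) ≠ ⊤ := by
    have hδ : 0 < s 1 - s 0 := by linarith
    have hs1 : cone1 B (s 1 - s 0) (s 2 - s 0) (s 3 - s 0) (s 1 - s 0) ⊆
        {x : E3 | ∀ i, 0 ≤ B.coord i x} := by
      intro x hx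
      refine tet_sub B s (s 1) ?_
      have hs := coord_sum B x
      rw [mem_tet]
      simp only [cone1, Set.mem_ofPred_eq] at hx
      have e0 : B.coord 0 x = 1 - B.coord 1 x - B.coord 2 x - B.coord 3 x := by linarith
      obtain ⟨⟨p1, p2, p3⟩, h⟩ := hx
      have k2 := mul_le_mul_of_nonneg_left (show s 1 - s 0 ≤ s 2 - s 0 by linarith [ht.1, ht.2]) p2
      have k3 := mul_le_mul_of_nonneg_left (show s 1 - s 0 ≤ s 3 - s 0 by linarith [ht.1, ht.2]) p3
      refine ⟨⟨?_, p1, p2, p3⟩, ?_⟩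
      · rw [e0]
        by_contra hcon
        have : (s 1 - s 0) * 1 < (s 1 - s 0) * (B.coord 1 x + B.coord 2 x + B.coord 3 x) :=
          mul_lt_mul_of_pos_left (by linarith) hδ
        linarith
      · rw [e0]; linarith
    have hf := measure_ne_top_of_subset hs1 (tet_full_finite B)
    rw [cone1_vol _ _ _ _ _ hδ] at hf
    have hf1 : volume (cone1 B (s 1 - s 0) (s 2 - s 0) (s 3 - s 0) 1) ≠ ⊤ := by
      intro htop
      rw [htop, ENNReal.mul_top (by simpa using pow_pos hδ 3)] at hf
      exact hf rfl
    rw [cone1_vol _ _ _ _ _ hr]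
    exact ENNReal.mul_ne_top ENNReal.ofReal_ne_top hf1
  have h4 := congrArg (fun S => (volume S).toReal) this
  rw [measure_sdiff hsub (tet_meas B s t).nullMeasurableSet (tet_finite B s t),
    ENNReal.toReal_sub_of_le (measure_mono hsub) hfin,
    cone1_vol _ _ _ _ _ hr, cone2_vol _ _ _ _ _ hr1, ENNReal.toReal_mul, ENNReal.toReal_mul,
    ENNReal.toReal_ofReal (by positivity), ENNReal.toReal_ofReal (by positivity)] at h4
  linear_combination -h4

/-- Two vertices below. -/
theorem case2' (B : AffineBasis (Fin 4) ℝ E3) (s : Fin 4 → ℝ) (a b : ℝ)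
    (h01 : s 0 ≤ s 1) (h1 : s 1 ≤ a) (h2 : b ≤ s 2) (h3 : b ≤ s 3) :
    IsP a b (fun t => (volume (tet B s t)).toReal) := by
  let s' : ℕ → Fin 4 → ℝ := fun m => Function.update s 0 (s 0 - 1 / ((m : ℝ) + 1))
  have hpos : ∀ m : ℕ, 0 < 1 / ((m : ℝ) + 1) := fun m => by positivity
  have e0 : ∀ m, s' m 0 = s 0 - 1 / ((m : ℝ) + 1) := fun m => by simp [s']
  have e1 : ∀ m, s' m 1 = s 1 := fun m => by simp [s']
  have e2 : ∀ m, s' m 2 = s 2 := fun m => by simp [s']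
  have e3 : ∀ m, s' m 3 = s 3 := fun m => by simp [s']
  refine IsP.lim (V := fun m t => (volume (tet B (s' m) t)).toReal) (fun m => ?_) fun t ht => ?_
  · refine case2 B (s' m) a b ?_ ?_ ?_ ?_
    · rw [e0, e1]; linarith [hpos m]
    · rwa [e1]
    · rwa [e2]
    · rwa [e3]
  · have hinter : tet B s t = ⋂ m, tet B (s' m) t := by
      ext x
      simp only [Set.mem_iInter, mem_tet, e0, e1, e2, e3]
      constructor
      · rintro ⟨⟨p0, p1, p2, p3⟩, h⟩ m
        refine ⟨⟨p0, p1, p2, p3⟩, ?_⟩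
        have := mul_nonneg p0 (hpos m).le
        linarith
      · intro h
        refine ⟨(h 0).1, ?_⟩
        have hl : Filter.Tendsto (fun m : ℕ => B.coord 0 x * (s 0 - 1 / ((m : ℝ) + 1)) +
            B.coord 1 x * s 1 + B.coord 2 x * s 2 + B.coord 3 x * s 3) Filter.atTop
            (nhds (B.coord 0 x * (s 0 - 0) +
            B.coord 1 x * s 1 + B.coord 2 x * s 2 + B.coord 3 x * s 3)) :=
          ((((tendsto_const_nhds.sub tendsto_one_div_add_atTop_nhds_zero_nat).const_mul _).add_const
            _).add_const _).add_const _
        rw [sub_zero] at hl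
        exact le_of_tendsto' hl fun m => (h m).2
    rw [hinter]
    refine (ENNReal.tendsto_toReal ?_).comp (tendsto_measure_iInter_atTop
      (fun m => (tet_meas B (s' m) t).nullMeasurableSet) ?_ ⟨0, tet_finite B _ t⟩)
    · exact hinter ▸ tet_finite B s t
    · intro m m' hm x
      simp only [mem_tet, e0, e1, e2, e3]
      rintro ⟨⟨p0, p1, p2, p3⟩, h⟩
      refine ⟨⟨p0, p1, p2, p3⟩, ?_⟩
      have := mul_le_mul_of_nonneg_left (Nat.one_div_le_one_div (α := ℝ) hm) p0
      linarith

theorem case_sorted (B : AffineBasis (Fin 4) ℝ E3) (s : Fin 4 → ℝ) (a b : ℝ)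
    (h01 : s 0 ≤ s 1) (h12 : s 1 ≤ s 2) (h23 : s 2 ≤ s 3) (h : ∀ i, s i ∉ Set.Ioo a b) :
    IsP a b (fun t => (volume (tet B s t)).toReal) := by
  have h' : ∀ i, s i ≤ a ∨ b ≤ s i := fun i => by
    by_contra hc
    push Not at hc
    exact h i hc
  rcases h' 0 with h0 | h0
  · rcases h' 1 with h1 | h1
    · rcases h' 2 with h2 | h2
      · rcases h' 3 with h3 | h3
        · refine (IsP.const a b (volume {x : E3 | ∀ i, 0 ≤ B.coord i x}).toReal).congr
            fun t ht => ?_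
          congr 2
          refine Set.Subset.antisymm (tet_sub B s t) fun x hx => ⟨hx, ?_⟩
          have hs := B.sum_coord_apply_eq_one x
          calc ∑ i, B.coord i x * s i ≤ ∑ i, B.coord i x * t := by
                refine Finset.sum_le_sum fun i _ => mul_le_mul_of_nonneg_left ?_ (hx i)
                fin_cases i <;> simp <;> linarith [ht.1]
            _ = t := by rw [← Finset.sum_mul, hs, one_mul]
        · exact case3 B s a b h0 h1 h2 h3
      · exact case2' B s a b h01 h1 h2 (by linarith)
    · exact case1 B s a b h0 h1 (by linarith) (by linarith)
  · refine (IsP.const a b 0).congr fun t ht => ?_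
    have : tet B s t = ∅ := by
      refine Set.eq_empty_of_forall_notMem fun x hx => ?_
      have hs := B.sum_coord_apply_eq_one x
      have : b ≤ t := by
        refine le_trans ?_ hx.2
        calc b = ∑ i, B.coord i x * b := by rw [← Finset.sum_mul, hs, one_mul]
          _ ≤ _ := by
            refine Finset.sum_le_sum fun i _ => mul_le_mul_of_nonneg_left ?_ (hx.1 i)
            fin_cases i <;> simp <;> linarith
      linarith [ht.2]
    simp [this]

theorem case_all (B : AffineBasis (Fin 4) ℝ E3) (s : Fin 4 → ℝ) (a b : ℝ)
    (h : ∀ i, s i ∉ Set.Ioo a b) :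
    IsP a b (fun t => (volume (tet B s t)).toReal) := by
  let e := Tuple.sort s
  have hm := Tuple.monotone_sort s
  refine (case_sorted (B.reindex e.symm) (s ∘ e) a b (hm (by decide)) (hm (by decide))
    (hm (by decide)) (fun i => h _)).congr fun t _ => ?_
  congr 2
  ext x
  simp only [tet, Set.mem_ofPred_eq, Function.comp, AffineBasis.coord_reindex, Equiv.symm_symm]
  rw [Equiv.sum_comp e (fun i => B.coord i x * s i)]
  have : (∀ i, 0 ≤ B.coord i x) ↔ ∀ i, 0 ≤ B.coord (e i) x :=
    ⟨fun h i => h _, fun h i => by simpa using h (e.symm i)⟩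
  rw [this]

theorem hull_weights {k : ℕ} (v : Fin k → E3) (I : Finset (Fin k)) (x : E3)
    (hx : x ∈ convexHull ℝ (v '' (I : Set (Fin k)))) :
    ∃ w : Fin k → ℝ, (∀ i, 0 ≤ w i) ∧ (∀ i, i ∉ I → w i = 0) ∧ ∑ i, w i = 1 ∧
      ∑ i, w i • v i = x := by
  classical
  have hsub : convexHull ℝ (v '' (I : Set (Fin k))) ⊆ {x | ∃ w : Fin k → ℝ, (∀ i, 0 ≤ w i) ∧
      (∀ i, i ∉ I → w i = 0) ∧ ∑ i, w i = 1 ∧ ∑ i, w i • v i = x} := by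
    refine convexHull_min ?_ ?_
    · rintro _ ⟨i, hi, rfl⟩
      refine ⟨Pi.single i 1, fun j => ?_, fun j hj => ?_, ?_, ?_⟩
      · by_cases h : j = i
        · subst h; simp
        · simp [h]
      · have : j ≠ i := fun h => hj (h ▸ hi)
        simp [this]
      · simp
      · rw [Finset.sum_eq_single i]
        · simp
        · intro j _ hj; simp [hj]
        · simp
    · rintro x ⟨w, h1, h2, h3, h4⟩ y ⟨w', h1', h2', h3', h4'⟩ p q hp hq hpq
      refine ⟨fun i => p * w i + q * w' i, fun i => ?_, fun i hi => ?_, ?_, ?_⟩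
      · exact add_nonneg (mul_nonneg hp (h1 i)) (mul_nonneg hq (h1' i))
      · simp [h2 i hi, h2' i hi]
      · rw [Finset.sum_add_distrib, ← Finset.mul_sum, ← Finset.mul_sum, h3, h3']; simpa using hpq
      · simp only [add_smul, mul_smul]
        rw [Finset.sum_add_distrib, ← Finset.smul_sum, ← Finset.smul_sum, h4, h4']
  exact hsub hx

theorem hull_of_weights {k : ℕ} (v : Fin k → E3) (I : Finset (Fin k)) (w : Fin k → ℝ)
    (h1 : ∀ i, 0 ≤ w i) (h2 : ∀ i, i ∉ I → w i = 0) (h3 : ∑ i, w i = 1) :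
    ∑ i, w i • v i ∈ convexHull ℝ (v '' (I : Set (Fin k))) := by
  have e1 : ∑ i, w i • v i = ∑ i ∈ I, w i • v i :=
    (Finset.sum_subset (Finset.subset_univ I) fun i _ hi => by simp [h2 i hi]).symm
  have e2 : ∑ i ∈ I, w i = 1 := by
    rw [← h3]; exact Finset.sum_subset (Finset.subset_univ I) fun i _ hi => h2 i hi
  rw [e1]
  exact (convex_convexHull ℝ _).sum_mem (fun i _ => h1 i) e2
    fun i hi => subset_convexHull ℝ _ ⟨i, hi, rfl⟩

theorem exists_generic {k : ℕ} (v : Fin k → E3) : ∃ ω : Fin k → ℝ, ∀ (y : E3) (c : ℝ)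
    (I : Finset (Fin k)), (∀ i ∈ I, ⟪y, v i⟫ + c = ω i) →
      AffineIndependent ℝ (fun i : I => v i) := by
  classical
  let J := {I : Finset (Fin k) // ¬ AffineIndependent ℝ (fun i : I => v i)}
  have hex : ∀ I : J, ∃ c : Fin k → ℝ, c ≠ 0 ∧ (∀ i, i ∉ I.1 → c i = 0) ∧ ∑ i, c i = 0 ∧
      ∑ i, c i • v i = 0 := by
    rintro ⟨I, hI⟩
    rw [affineIndependent_iff] at hI
    push Not at hI
    obtain ⟨s, w, h1, h2, e, he, hne⟩ := hI
    let u : I → ℝ := fun i => if i ∈ s then w i else 0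
    let c : Fin k → ℝ := fun i => if h : i ∈ I then u ⟨i, h⟩ else 0
    have hc : ∀ i : I, c i = u i := fun i => by simp [c]
    have hc0 : ∀ i, i ∉ I → c i = 0 := fun i hi => by simp [c, hi]
    refine ⟨c, fun h => hne ?_, hc0, ?_, ?_⟩
    · have := congrFun h e
      rw [hc] at this
      simpa [u, he] using this
    · rw [← Finset.sum_subset (Finset.subset_univ I) fun i _ hi => hc0 i hi, ← Finset.sum_coe_sort]
      simp only [hc, u]
      rw [Finset.sum_ite_mem, Finset.univ_inter, h1]
    · rw [← Finset.sum_subset (Finset.subset_univ I) fun i _ hi => by rw [hc0 i hi, zero_smul],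
        ← Finset.sum_coe_sort]
      simp only [hc, u, ite_smul, zero_smul]
      rw [Finset.sum_ite_mem, Finset.univ_inter, h2]
  choose c hc using hex
  let W : J → Submodule ℝ (Fin k → ℝ) := fun I =>
    LinearMap.ker (∑ i, c I i • LinearMap.proj (R := ℝ) (φ := fun _ : Fin k => ℝ) i)
  have hW : ∀ I ω, ω ∈ W I ↔ ∑ i, c I i * ω i = 0 := fun I ω => by
    simp [W, LinearMap.mem_ker, LinearMap.sum_apply]
  have hne : ⋃ I, (W I : Set (Fin k → ℝ)) ≠ Set.univ := by
    intro h
    obtain ⟨I, hI⟩ := Subspace.exists_eq_top_of_iUnion_eq_univ h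
    have : c I ∈ W I := hI ▸ Submodule.mem_top
    rw [hW, Finset.sum_eq_zero_iff_of_nonneg fun i _ => mul_self_nonneg _] at this
    exact (hc I).1 (funext fun i => mul_self_eq_zero.1 (this i (Finset.mem_univ i)))
  obtain ⟨ω, hω⟩ := (Set.ne_univ_iff_exists_notMem _).1 hne
  refine ⟨ω, fun y d I hI => ?_⟩
  by_contra hcon
  refine hω (Set.mem_iUnion.2 ⟨⟨I, hcon⟩, ?_⟩)
  obtain ⟨-, h0, h1, h2⟩ := hc ⟨I, hcon⟩
  rw [SetLike.mem_coe, hW]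
  calc ∑ i, c ⟨I, hcon⟩ i * ω i = ∑ i, (⟪y, c ⟨I, hcon⟩ i • v i⟫ + c ⟨I, hcon⟩ i * d) := by
        refine Finset.sum_congr rfl fun i _ => ?_
        by_cases hi : i ∈ I
        · rw [← hI i hi, inner_smul_right]; ring
        · simp [h0 i hi]
    _ = 0 := by
        rw [Finset.sum_add_distrib, ← inner_sum, h2, ← Finset.sum_mul, h1]; simp

/-- Lower supporting affine function at an interior point. -/
theorem exists_support {k : ℕ} (v : Fin k → E3) (ω : Fin k → ℝ) (x : E3)
    (hx : x ∈ interior (convexHull ℝ (Set.range v))) :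
    ∃ (y : E3) (c : ℝ) (I : Finset (Fin k)), (∀ i, ⟪y, v i⟫ + c ≤ ω i) ∧
      (∀ i, i ∈ I ↔ ⟪y, v i⟫ + c = ω i) ∧ x ∈ convexHull ℝ (v '' (I : Set (Fin k))) := by
  classical
  obtain ⟨r, hr, hball⟩ := Metric.isOpen_iff.1 isOpen_interior x hx
  let M := ∑ i, |ω i|
  have hM : ∀ i, |ω i| ≤ M := fun i =>
    Finset.single_le_sum (f := fun i => |ω i|) (fun i _ => abs_nonneg _) (Finset.mem_univ i)
  let D : Set (E3 × ℝ) := {q | (∀ i, ⟪q.1, v i - x⟫ + q.2 ≤ ω i) ∧ -M ≤ q.2}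
  have hDc : IsClosed D := by
    have hDe : D = (⋂ i, {q : E3 × ℝ | ⟪q.1, v i - x⟫ + q.2 ≤ ω i}) ∩ {q | -M ≤ q.2} := by
      ext q; simp [D]
    rw [hDe]
    refine IsClosed.inter ?_ (isClosed_le continuous_const continuous_snd)
    exact isClosed_iInter fun i => isClosed_le (by fun_prop) continuous_const
  have hup : ∀ q ∈ D, ∀ z ∈ convexHull ℝ (Set.range v), ⟪q.1, z - x⟫ + q.2 ≤ M := by
    intro q hq z hz
    have hconv : Convex ℝ {z : E3 | ⟪q.1, z - x⟫ + q.2 ≤ M} := by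
      have : {z : E3 | ⟪q.1, z - x⟫ + q.2 ≤ M} = {z : E3 | innerₗ E3 q.1 z ≤ M - q.2 + ⟪q.1, x⟫} := by
        ext z
        simp only [Set.mem_ofPred_eq, inner_sub_right, innerₗ_apply_apply]
        constructor <;> intro h <;> linarith
      rw [this]
      exact convex_halfSpace_le (innerₗ E3 q.1).isLinear _
    refine convexHull_min ?_ hconv hz
    rintro _ ⟨i, rfl⟩
    exact (hq.1 i).trans ((le_abs_self _).trans (hM i))
  have hDb : D ⊆ Metric.closedBall (0 : E3) (4 * M / r) ×ˢ Set.Icc (-M) M := by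
    intro q hq
    have h2 : q.2 ≤ M := by
      have := hup q hq x (interior_subset hx)
      simpa using this
    refine ⟨?_, hq.2, h2⟩
    rw [mem_closedBall_zero_iff]
    by_cases h0 : ‖q.1‖ = 0
    · rw [h0]
      have : 0 ≤ M := Finset.sum_nonneg fun i _ => abs_nonneg _
      positivity
    have hz : x + (r / 2 / ‖q.1‖) • q.1 ∈ convexHull ℝ (Set.range v) := by
      refine interior_subset (hball ?_)
      rw [Metric.mem_ball, dist_eq_norm, add_sub_cancel_left, norm_smul, Real.norm_eq_abs,
        abs_of_nonneg (by positivity), div_mul_cancel₀ _ h0]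
      linarith
    have := hup q hq _ hz
    rw [add_sub_cancel_left, inner_smul_right, real_inner_self_eq_norm_sq] at this
    have e : r / 2 / ‖q.1‖ * ‖q.1‖ ^ 2 = r / 2 * ‖q.1‖ := by field_simp
    rw [e] at this
    rw [le_div_iff₀ hr]
    linarith [hq.2]
  have hD : IsCompact D :=
    ((isCompact_closedBall _ _).prod isCompact_Icc).of_isClosed_subset hDc hDb
  have hne : D.Nonempty := ⟨(0, -M), fun i => by
    simpa using (neg_le_neg (hM i)).trans (neg_abs_le _), le_refl _⟩
  obtain ⟨q, hq, hmax⟩ := hD.exists_isMaxOn hne continuous_snd.continuousOn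
  let I := Finset.univ.filter fun i => ⟪q.1, v i - x⟫ + q.2 = ω i
  refine ⟨q.1, q.2 - ⟪q.1, x⟫, I, fun i => ?_, fun i => ?_, ?_⟩
  · have := hq.1 i
    rw [inner_sub_right] at this; linarith
  · simp only [I, Finset.mem_filter, Finset.mem_univ, true_and, inner_sub_right]
    constructor <;> intro h <;> linarith
  by_contra hcon
  obtain ⟨f, u, hf, hu⟩ := geometric_hahn_banach_closed_point (convex_convexHull ℝ _)
    (((I.finite_toSet.image v).isCompact_convexHull ℝ).isClosed) hcon
  let h := (InnerProductSpace.toDual ℝ E3).symm f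
  have hh : ∀ z, ⟪h, z⟫ = f z := fun z => InnerProductSpace.toDual_symm_apply
  -- perturb
  have hev : ∀ i, ∀ᶠ ε in nhdsWithin (0 : ℝ) (Set.Ioi 0),
      ⟪q.1 + ε • h, v i - x⟫ + (q.2 + ε * (f x - u)) ≤ ω i := by
    intro i
    by_cases hi : i ∈ I
    · filter_upwards [self_mem_nhdsWithin] with ε hε
      have hfi := hf (v i) (subset_convexHull ℝ _ ⟨i, hi, rfl⟩)
      have hi' : ⟪q.1, v i - x⟫ + q.2 = ω i := by simpa [I] using hi
      rw [inner_add_left, real_inner_smul_left, hh, map_sub]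
      have := mul_pos (show (0 : ℝ) < ε from hε) (sub_pos.2 hfi)
      linarith
    · have hi' : ⟪q.1, v i - x⟫ + q.2 < ω i :=
        lt_of_le_of_ne (hq.1 i) (by simpa [I] using hi)
      have hcont : Continuous fun ε : ℝ =>
          ⟪q.1 + ε • h, v i - x⟫ + (q.2 + ε * (f x - u)) := by fun_prop
      have := (hcont.tendsto 0).eventually (gt_mem_nhds (show _ < ω i by simpa using hi'))
      exact nhdsWithin_le_nhds (this.mono fun ε h => h.le)
  obtain ⟨ε, hε, hε0⟩ := ((Filter.eventually_all.2 hev).and self_mem_nhdsWithin).exists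
  have hpos : 0 < ε * (f x - u) := mul_pos hε0 (sub_pos.2 hu)
  have hmem : (q.1 + ε • h, q.2 + ε * (f x - u)) ∈ D := ⟨hε, by
    have := hq.2
    simp only; linarith⟩
  have := hmax hmem
  simp only [Set.mem_ofPred_eq] at this
  linarith

theorem small_null {k : ℕ} (v : Fin k → E3) (I : Finset (Fin k)) (hI : I.card ≤ 3) :
    volume (convexHull ℝ (v '' (I : Set (Fin k)))) = 0 := by
  classical
  refine measure_mono_null (convexHull_subset_affineSpan _)
    (Measure.addHaar_affineSubspace volume _ fun htop => ?_)
  rcases Nat.eq_zero_or_pos I.card with h0 | h0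
  · rw [Finset.card_eq_zero] at h0
    subst h0
    simp at htop
  · have h1 := finrank_vectorSpan_image_finset_le ℝ v I (n := I.card - 1) (by omega)
    rw [Finset.coe_image, ← direction_affineSpan, htop, AffineSubspace.direction_top,
      finrank_top, finrank_euclideanSpace_fin] at h1
    omega

theorem plane_null (x₀ n : E3) (hn : ‖n‖ = 1) (t : ℝ) :
    volume {x : E3 | ⟪x - x₀, n⟫ = t} = 0 := by
  let L : E3 →ᵃ[ℝ] ℝ := ((innerₗ E3 n).toAffineMap).comp (AffineMap.id ℝ E3 - AffineMap.const ℝ E3 x₀)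
  have hL : ∀ x, L x = ⟪x - x₀, n⟫ := fun x => by
    simp [L, real_inner_comm]
  let S : AffineSubspace ℝ E3 := (AffineSubspace.mk' t ⊥).comap L
  have hS : (S : Set E3) = {x : E3 | ⟪x - x₀, n⟫ = t} := by
    ext x
    simp [S, hL, AffineSubspace.mem_mk', sub_eq_zero]
  rw [← hS]
  refine Measure.addHaar_affineSubspace volume S fun htop => ?_
  have hm : (x₀ + (t + 1) • n) ∈ (S : Set E3) := by rw [htop]; trivial
  rw [hS] at hm
  simp [real_inner_smul_left, hn] at hm

theorem hull_isP {k : ℕ} (v : Fin k → E3) (x₀ n : E3) (I : Finset (Fin k)) (hI : I.card = 4)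
    (hind : AffineIndependent ℝ (fun i : I => v i)) (a b : ℝ)
    (h : ∀ i : Fin k, ⟪v i - x₀, n⟫ ∉ Set.Ioo a b) :
    IsP a b fun t => (volume (convexHull ℝ (v '' (I : Set (Fin k))) ∩
      {x : E3 | ⟪x - x₀, n⟫ ≤ t})).toReal := by
  classical
  let e : Fin 4 ≃ I := (finCongr hI.symm).trans I.equivFin.symm
  have hind' : AffineIndependent ℝ (fun i : Fin 4 => v (e i)) := hind.comp_embedding e.toEmbedding
  let B : AffineBasis (Fin 4) ℝ E3 := ⟨fun i => v (e i), hind', by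
    rw [hind'.affineSpan_eq_top_iff_card_eq_finrank_add_one]; simp⟩
  have hB : ∀ i, B i = v (e i) := fun i => rfl
  have hrange : Set.range B = v '' (I : Set (Fin k)) := by
    ext z
    constructor
    · rintro ⟨i, rfl⟩
      exact ⟨e i, (e i).2, rfl⟩
    · rintro ⟨i, hi, rfl⟩
      exact ⟨e.symm ⟨i, hi⟩, by simp [hB]⟩
  refine (case_all B (fun i => ⟪v (e i) - x₀, n⟫) a b fun i => h _).congr fun t _ => ?_
  congr 2
  rw [← hrange, B.convexHull_eq_nonneg_coord]
  ext x
  have hx : ⟪x - x₀, n⟫ = ∑ i, B.coord i x * ⟪v (e i) - x₀, n⟫ := by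
    have h1 := B.linear_combination_coord_eq_self x
    have h2 := B.sum_coord_apply_eq_one x
    calc ⟪x - x₀, n⟫ = ⟪∑ i, B.coord i x • (v (e i) - x₀), n⟫ := by
          congr 1
          simp only [smul_sub]
          rw [Finset.sum_sub_distrib, ← Finset.sum_smul, h2, one_smul]
          simp only [hB] at h1
          rw [h1]
      _ = _ := by
          rw [sum_inner]; simp only [real_inner_smul_left]
  simp only [tet, Set.mem_inter_iff, Set.mem_ofPred_eq, hx]

theorem half_closed (x₀ n : E3) (t : ℝ) : IsClosed {x : E3 | ⟪x - x₀, n⟫ ≤ t} :=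
  isClosed_le (by fun_prop) continuous_const

theorem main_isP {k : ℕ} (v : Fin k → E3) (x₀ n : E3) (a b : ℝ)
    (h : ∀ i : Fin k, ⟪v i - x₀, n⟫ ∉ Set.Ioo a b) :
    IsP a b fun t => (volume (convexHull ℝ (Set.range v) ∩ {x : E3 | ⟪x - x₀, n⟫ ≤ t})).toReal := by
  classical
  obtain ⟨ω, hω⟩ := exists_generic v
  let T : Finset (Finset (Fin k)) := Finset.univ.filter fun I => I.card = 4 ∧
    ∃ (y : E3) (c : ℝ), (∀ i, ⟪y, v i⟫ + c ≤ ω i) ∧ (∀ i, i ∈ I ↔ ⟪y, v i⟫ + c = ω i)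
  have hT : ∀ I, I ∈ T ↔ I.card = 4 ∧ ∃ (y : E3) (c : ℝ), (∀ i, ⟪y, v i⟫ + c ≤ ω i) ∧
      (∀ i, i ∈ I ↔ ⟪y, v i⟫ + c = ω i) := fun I => by simp [T]
  let H : Finset (Fin k) → Set E3 := fun I => convexHull ℝ (v '' (I : Set (Fin k)))
  have hHc : ∀ I, IsClosed (H I) := fun I =>
    ((I.finite_toSet.image v).isCompact_convexHull ℝ).isClosed
  have hHf : ∀ I, volume (H I) ≠ ⊤ := fun I =>
    ((I.finite_toSet.image v).isCompact_convexHull ℝ).measure_lt_top.ne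
  -- the tetrahedra have disjoint interiors
  have key : ∀ I ∈ T, ∀ J ∈ T, H I ∩ H J ⊆ H (I ∩ J) := by
    intro I hI J hJ x ⟨hxI, hxJ⟩
    obtain ⟨-, y, c, h1, h2⟩ := (hT I).1 hI
    obtain ⟨-, y', c', h1', h2'⟩ := (hT J).1 hJ
    obtain ⟨w, w0, w1, w2, w3⟩ := hull_weights v I x hxI
    obtain ⟨u, u0, u1, u2, u3⟩ := hull_weights v J x hxJ
    have lin : ∀ (y : E3) (c : ℝ) (w : Fin k → ℝ), ∑ i, w i = 1 → ∑ i, w i • v i = x →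
        ∑ i, w i * (ω i - (⟪y, v i⟫ + c)) = ∑ i, w i * ω i - (⟪y, x⟫ + c) := by
      intro y c w w2 w3
      have : ⟪y, x⟫ + c = ∑ i, w i * (⟪y, v i⟫ + c) := by
        rw [← w3, inner_sum]
        simp only [inner_smul_right, mul_add]
        rw [Finset.sum_add_distrib, ← Finset.sum_mul, w2, one_mul]
      rw [this, ← Finset.sum_sub_distrib]
      exact Finset.sum_congr rfl fun i _ => by ring
    have a1 := lin y c w w2 w3
    have a2 := lin y' c' w w2 w3
    have b1 := lin y c u u2 u3
    have b2 := lin y' c' u u2 u3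
    have z1 : ∑ i, w i * (ω i - (⟪y, v i⟫ + c)) = 0 := Finset.sum_eq_zero fun i _ => by
      by_cases hi : i ∈ I
      · rw [(h2 i).1 hi]; simp
      · rw [w1 i hi]; simp
    have z2 : ∑ i, u i * (ω i - (⟪y', v i⟫ + c')) = 0 := Finset.sum_eq_zero fun i _ => by
      by_cases hi : i ∈ J
      · rw [(h2' i).1 hi]; simp
      · rw [u1 i hi]; simp
    have n1 : ∀ i ∈ Finset.univ, 0 ≤ w i * (ω i - (⟪y', v i⟫ + c')) :=
      fun i _ => mul_nonneg (w0 i) (sub_nonneg.2 (h1' i))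
    have n2 : ∀ i ∈ Finset.univ, 0 ≤ u i * (ω i - (⟪y, v i⟫ + c)) :=
      fun i _ => mul_nonneg (u0 i) (sub_nonneg.2 (h1 i))
    have z3 : ∑ i, w i * (ω i - (⟪y', v i⟫ + c')) = 0 := by
      have := Finset.sum_nonneg n1
      have := Finset.sum_nonneg n2
      linarith
    rw [Finset.sum_eq_zero_iff_of_nonneg n1] at z3
    rw [← w3]
    refine hull_of_weights v (I ∩ J) w w0 (fun i hi => ?_) w2
    by_cases hiI : i ∈ I
    · have hiJ : i ∉ J := fun hiJ => hi (Finset.mem_inter.2 ⟨hiI, hiJ⟩)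
      rcases mul_eq_zero.1 (z3 i (Finset.mem_univ i)) with h | h
      · exact h
      · exact absurd ((h2' i).2 (by linarith)) hiJ
    · exact w1 i hiI
  have hdisj : ∀ I ∈ T, ∀ J ∈ T, I ≠ J → volume (H I ∩ H J) = 0 := by
    intro I hI J hJ hne
    refine measure_mono_null (key I hI J hJ) (small_null v _ ?_)
    have c1 := ((hT I).1 hI).1
    have c2 := ((hT J).1 hJ).1
    by_contra hcon
    have e1 : I ∩ J = I := Finset.eq_of_subset_of_card_le Finset.inter_subset_left (by omega)
    have e2 : I ∩ J = J := Finset.eq_of_subset_of_card_le Finset.inter_subset_right (by omega)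
    exact hne (e1.symm.trans e2)
  -- covering
  let N : Set E3 := frontier (convexHull ℝ (Set.range v)) ∪
    ⋃ I ∈ Finset.univ.filter (fun I : Finset (Fin k) => I.card ≤ 3), H I
  have hN : volume N = 0 := by
    refine measure_union_null (Convex.addHaar_frontier volume (convex_convexHull ℝ _)) ?_
    refine (measure_biUnion_null_iff (Finset.countable_toSet
      (Finset.univ.filter (fun I : Finset (Fin k) => I.card ≤ 3)))).2 fun I hI => ?_
    exact small_null v I (by simpa using hI)
  have hcov : convexHull ℝ (Set.range v) ⊆ (⋃ I ∈ T, H I) ∪ N := by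
    intro x hx
    by_cases hxi : x ∈ interior (convexHull ℝ (Set.range v))
    · obtain ⟨y, c, I, h1, h2, h3⟩ := exists_support v ω x hxi
      have hind := hω y c I fun i hi => (h2 i).1 hi
      have hcard : I.card ≤ 4 := by
        have h4 := hind.card_le_finrank_succ
        have h5 := Submodule.finrank_le (vectorSpan ℝ (Set.range fun i : I => v i))
        rw [finrank_euclideanSpace_fin] at h5
        rw [Fintype.card_coe] at h4
        omega
      by_cases h4 : I.card = 4
      · left
        exact Set.mem_biUnion ((hT I).2 ⟨h4, y, c, h1, h2⟩) h3
      · right; right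
        refine Set.mem_biUnion (x := I) ?_ h3
        simp; omega
    · right; left
      exact ⟨subset_closure hx, hxi⟩
  refine (IsP.sum T (V := fun I t => (volume (H I ∩ {x : E3 | ⟪x - x₀, n⟫ ≤ t})).toReal)
    fun I hI => ?_).congr fun t ht => ?_
  · obtain ⟨c4, y, c, -, h2⟩ := (hT I).1 hI
    exact hull_isP v x₀ n I c4 (hω y c I fun i hi => (h2 i).1 hi) a b h
  · have hU : volume (convexHull ℝ (Set.range v) ∩ {x : E3 | ⟪x - x₀, n⟫ ≤ t}) =
        volume (⋃ I ∈ T, H I ∩ {x : E3 | ⟪x - x₀, n⟫ ≤ t}) := by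
      refine le_antisymm ?_ (measure_mono ?_)
      · calc _ ≤ volume ((⋃ I ∈ T, H I ∩ {x : E3 | ⟪x - x₀, n⟫ ≤ t}) ∪ N) := by
              refine measure_mono fun x hx => ?_
              rcases hcov hx.1 with h' | h'
              · left
                simp only [Set.mem_iUnion] at h' ⊢
                obtain ⟨I, hI, h'⟩ := h'
                exact ⟨I, hI, h', hx.2⟩
              · exact Or.inr h'
          _ ≤ _ := (measure_union_le _ _).trans (by rw [hN, add_zero])
      · refine Set.iUnion₂_subset fun I _ => Set.inter_subset_inter_left _ ?_
        exact convexHull_mono (Set.image_subset_range _ _)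
    rw [hU, measure_biUnion_finset₀, ENNReal.toReal_sum]
    · exact fun I _ => measure_ne_top_of_subset Set.inter_subset_left (hHf I)
    · intro I hI J hJ hne
      exact measure_mono_null (Set.inter_subset_inter Set.inter_subset_left Set.inter_subset_left)
        (hdisj I hI J hJ hne)
    · exact fun I _ => ((hHc I).inter (half_closed x₀ n t)).measurableSet.nullMeasurableSet

theorem V_cont {k : ℕ} (v : Fin k → E3) (x₀ n : E3) (hn : ‖n‖ = 1) :
    Continuous fun t =>
      (volume (convexHull ℝ (Set.range v) ∩ {x : E3 | ⟪x - x₀, n⟫ ≤ t})).toReal := by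
  have hC := (Set.finite_range v).isCompact_convexHull ℝ
  have hm : ∀ t, MeasurableSet (convexHull ℝ (Set.range v) ∩ {x : E3 | ⟪x - x₀, n⟫ ≤ t}) :=
    fun t => (hC.isClosed.inter (half_closed x₀ n t)).measurableSet
  rw [continuous_iff_continuousAt]
  intro t
  refine (ENNReal.tendsto_toReal (measure_ne_top_of_subset Set.inter_subset_left
    hC.measure_lt_top.ne)).comp (tendsto_measure_of_ae_tendsto_indicator (nhds t) (hm t) hm
      hC.isClosed.measurableSet hC.measure_lt_top.ne
      (Filter.Eventually.of_forall fun _ => Set.inter_subset_left) ?_)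
  have h0 : ∀ᵐ x : E3, ⟪x - x₀, n⟫ ≠ t := by
    rw [ae_iff]; simpa using plane_null x₀ n hn t
  filter_upwards [h0] with x hx
  rcases lt_or_gt_of_ne hx with h | h
  · filter_upwards [lt_mem_nhds h] with s hs
    simp [hs.le, h.le]
  · filter_upwards [gt_mem_nhds h] with s hs
    simp [not_le.2 hs, not_le.2 h]

theorem stmt10 (k : ℕ) (v : Fin k → E3) (x₀ n : E3) (hn : ‖n‖ = 1) :
    let C := convexHull ℝ (Set.range v)
    let V : ℝ → ℝ := fun s => (volume (C ∩ {x : E3 | ⟪x - x₀, n⟫ ≤ s})).toReal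
    ∀ a b : ℝ, a ≤ b → (∀ i : Fin k, ⟪v i - x₀, n⟫ ∉ Set.Ioo a b) →
      ∃ p : Polynomial ℝ, p.natDegree ≤ 3 ∧
        ∀ t ∈ Set.Icc a b, V t = Polynomial.eval t p := by
  intro C V a b hab h
  rcases hab.eq_or_lt with rfl | hlt
  · refine ⟨Polynomial.C (V a), by simp, fun t ht => ?_⟩
    have : t = a := by simpa using ht
    simp [this]
  obtain ⟨p, hp, hV⟩ := main_isP v x₀ n a b h
  refine ⟨p, hp, ?_⟩
  have hcl : IsClosed {t | V t = Polynomial.eval t p} :=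
    isClosed_eq (V_cont v x₀ n hn) p.continuous
  have hsub : Set.Ioo a b ⊆ {t | V t = Polynomial.eval t p} := fun t ht => hV t ht
  have := closure_minimal hsub hcl
  rw [closure_Ioo hlt.ne] at this
  exact fun t ht => this ht
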